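/- arXiv:1208.6278 — 2 statements merged into one kernel-verified Lean document; each statement's English description precedes it below -/
import Mathlib

section
/- Let u > 0, C₀ ≥ 0 and Λ ≥ 0 be real numbers. There exists a constant C > 0, depending only on u, C₀ and Λ, such that for every real l ≥ u, every λ ∈ ℝ with |λ| ≤ Λ, every measurable V : [0, l] → ℝ with |V(x)| ≤ C₀ for all x ∈ [0, l], and every twice continuously differentiable f : [0, l] → ℂ satisfying f''(x) = (V(x) − λ)·f(x) for all x ∈ [0, l], one has ∫₀^l |f'(x)|² dx ≤ C·∫₀^l |f(x)|² dx. -/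
/-!
The estimate is local. On an interval `[a, b]` of length `L`, test `f'` against the weight
`φ y = (y - a) * (b - y)`, which vanishes at both ends: `∫ φ f' = -∫ φ' f`. Since
`‖f''‖ ≤ M ‖f‖`, the derivative `f'` oscillates on `[a, b]` by at most `M ∫ ‖f‖`, so replacing
`f' y` by `f' x` in `∫ φ f'` and using `∫ φ = L ^ 3 / 6` gives the pointwise bound
`‖f' x‖ ≤ (6 / L ^ 2 + M) ∫ ‖f‖` (`norm_deriv_le_integral`). No boundary terms and no smallness
of `L` enter. Squaring, applying Cauchy-Schwarz and integrating yields the `L²` bound with a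
constant uniform for `u ≤ L ≤ 2 * u` (`integral_deriv_sq_le_of_length`). An arbitrary interval of
length at least `u` splits into intervals of such lengths, and the local bounds add up.
-/

/-- Cauchy-Schwarz against the constant function `1`. -/
lemma sq_integral_le_mul_integral_sq {a b : ℝ} (hab : a < b) {g : ℝ → ℝ} (hg : Continuous g) :
    (∫ x in a..b, g x) ^ 2 ≤ (b - a) * ∫ x in a..b, g x ^ 2 := by
  -- Expand `0 ≤ ∫ (g - m) ^ 2`, where `m` is the mean value of `g`.
  set S := ∫ x in a..b, g x with hS
  set m := S / (b - a) with hm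
  have hL : 0 < b - a := sub_pos.2 hab
  have hpos : 0 ≤ ∫ x in a..b, (g x - m) ^ 2 :=
    intervalIntegral.integral_nonneg hab.le fun x _ => sq_nonneg _
  have hexp : ∫ x in a..b, (g x - m) ^ 2
      = (∫ x in a..b, g x ^ 2) - 2 * m * S + m ^ 2 * (b - a) := by
    have : ∀ x, (g x - m) ^ 2 = g x ^ 2 - 2 * m * g x + m ^ 2 := fun x => by ring
    simp_rw [this]
    rw [intervalIntegral.integral_add, intervalIntegral.integral_sub,
      intervalIntegral.integral_const_mul, intervalIntegral.integral_const, smul_eq_mul]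
    · ring
    all_goals exact Continuous.intervalIntegrable (by fun_prop) _ _
  rw [hexp] at hpos
  have hmS : m * (b - a) = S := div_mul_cancel₀ _ hL.ne'
  nlinarith [mul_nonneg hL.le hpos]

lemma integral_weight (a b : ℝ) : ∫ y in a..b, (y - a) * (b - y) = (b - a) ^ 3 / 6 := by
  have h : ∀ y ∈ Set.uIcc a b, HasDerivAt
      (fun y : ℝ => (b - a) * (y - a) ^ 2 / 2 - (y - a) ^ 3 / 3) ((y - a) * (b - y)) y := by
    intro y _
    have h1 : HasDerivAt (fun y : ℝ => y - a) 1 y := (hasDerivAt_id y).sub_const a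
    refine ((((h1.fun_pow 2).const_mul (b - a)).div_const 2).fun_sub
      ((h1.fun_pow 3).div_const 3)).congr_deriv ?_
    push_cast
    ring
  rw [intervalIntegral.integral_eq_sub_of_hasDerivAt h
    (Continuous.intervalIntegrable (by fun_prop) _ _)]
  ring

section Local

variable {f : ℝ → ℂ} {a b M : ℝ}

lemma norm_deriv_sub_le (hf : ContDiff ℝ 2 f) (hM : 0 ≤ M)
    (h : ∀ x ∈ Set.Icc a b, ‖deriv (deriv f) x‖ ≤ M * ‖f x‖) {x y : ℝ}
    (hx : x ∈ Set.Icc a b) (hy : y ∈ Set.Icc a b) :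
    ‖deriv f x - deriv f y‖ ≤ M * ∫ t in a..b, ‖f t‖ := by
  have hf1 : ContDiff ℝ 1 (deriv f) := hf.deriv'
  have hc : Continuous f := hf.continuous
  have hc2 : Continuous (deriv (deriv f)) := hf1.continuous_deriv_one
  wlog hyx : y ≤ x generalizing x y
  · rw [norm_sub_rev]
    exact this hy hx (not_le.1 hyx).le
  rw [← intervalIntegral.integral_deriv_eq_sub
    (fun t _ => hf1.differentiable one_ne_zero t) (hc2.intervalIntegrable _ _),
    ← intervalIntegral.integral_const_mul]
  calc ‖∫ t in y..x, deriv (deriv f) t‖ ≤ ∫ t in y..x, M * ‖f t‖ := by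
        refine intervalIntegral.norm_integral_le_of_norm_le hyx ?_
          (Continuous.intervalIntegrable (by fun_prop) _ _)
        refine Filter.Eventually.of_forall fun t ht => h t ⟨?_, ?_⟩
        · exact hy.1.trans ht.1.le
        · exact ht.2.trans hx.2
    _ ≤ ∫ t in a..b, M * ‖f t‖ := by
        refine intervalIntegral.integral_mono_interval hy.1 hyx hx.2 ?_
          (Continuous.intervalIntegrable (by fun_prop) _ _)
        exact Filter.Eventually.of_forall fun t => by positivity

/-- Pointwise bound of the derivative, up to the end points, by the `L¹`-norm of `f`. -/
lemma norm_deriv_le_integral (hf : ContDiff ℝ 2 f) (hM : 0 ≤ M) (hab : a < b)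
    (h : ∀ x ∈ Set.Icc a b, ‖deriv (deriv f) x‖ ≤ M * ‖f x‖) {x : ℝ} (hx : x ∈ Set.Icc a b) :
    ‖deriv f x‖ ≤ (6 / (b - a) ^ 2 + M) * ∫ t in a..b, ‖f t‖ := by
  have hf1 : ContDiff ℝ 1 (deriv f) := hf.deriv'
  have hc : Continuous f := hf.continuous
  have hc1 : Continuous (deriv f) := hf1.continuous
  have hL : 0 < b - a := sub_pos.2 hab
  set N := ∫ t in a..b, ‖f t‖ with hN
  have hparts : ∫ y in a..b, ((y - a) * (b - y)) • deriv f y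
      = - ∫ y in a..b, (a + b - 2 * y) • f y := by
    have hφ : ∀ y ∈ Set.uIcc a b,
        HasDerivAt (fun y : ℝ => (y - a) * (b - y)) (a + b - 2 * y) y := by
      intro y _
      refine (((hasDerivAt_id' y).sub_const a).fun_mul
        ((hasDerivAt_id' y).const_sub b)).congr_deriv ?_
      ring
    rw [intervalIntegral.integral_smul_deriv_eq_deriv_smul hφ
      (fun y _ => (hf.differentiable two_ne_zero y).hasDerivAt)
      (Continuous.intervalIntegrable (by fun_prop) _ _) (hc1.intervalIntegrable _ _)]
    simp
  have hsplit : ((b - a) ^ 3 / 6) • deriv f x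
      = (∫ y in a..b, ((y - a) * (b - y)) • (deriv f x - deriv f y))
        - ∫ y in a..b, (a + b - 2 * y) • f y := by
    rw [sub_eq_add_neg (∫ y in a..b, _), ← hparts, ← integral_weight, ← intervalIntegral.integral_smul_const,
      ← intervalIntegral.integral_add]
    · congr 1
      ext y
      rw [← smul_add, sub_add_cancel]
    all_goals exact Continuous.intervalIntegrable (by fun_prop) _ _
  have h1 : ‖∫ y in a..b, ((y - a) * (b - y)) • (deriv f x - deriv f y)‖
      ≤ (b - a) ^ 3 / 6 * (M * N) := by
    rw [← integral_weight, ← intervalIntegral.integral_mul_const]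
    refine intervalIntegral.norm_integral_le_of_norm_le hab.le ?_
      (Continuous.intervalIntegrable (by fun_prop) _ _)
    refine Filter.Eventually.of_forall fun y hy => ?_
    have hφ : 0 ≤ (y - a) * (b - y) :=
      mul_nonneg (sub_nonneg.2 hy.1.le) (sub_nonneg.2 hy.2)
    rw [norm_smul, Real.norm_of_nonneg hφ]
    exact mul_le_mul_of_nonneg_left
      (norm_deriv_sub_le hf hM h hx ⟨hy.1.le, hy.2⟩) hφ
  have h2 : ‖∫ y in a..b, (a + b - 2 * y) • f y‖ ≤ (b - a) * N := by
    rw [hN, ← intervalIntegral.integral_const_mul]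
    refine intervalIntegral.norm_integral_le_of_norm_le hab.le ?_
      (Continuous.intervalIntegrable (by fun_prop) _ _)
    refine Filter.Eventually.of_forall fun y hy => ?_
    rw [norm_smul]
    refine mul_le_mul_of_nonneg_right ?_ (norm_nonneg _)
    rw [Real.norm_eq_abs, abs_le]
    constructor <;> linarith [hy.1, hy.2]
  have h3 : (b - a) ^ 3 / 6 * ‖deriv f x‖ ≤ (b - a) ^ 3 / 6 * (M * N) + (b - a) * N := by
    have hc3 : 0 ≤ (b - a) ^ 3 / 6 := by positivity
    rw [← Real.norm_of_nonneg hc3, ← norm_smul, hsplit, Real.norm_of_nonneg hc3]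
    exact (norm_sub_le _ _).trans (add_le_add h1 h2)
  refine le_of_mul_le_mul_left (h3.trans (le_of_eq ?_)) (by positivity : 0 < (b - a) ^ 3 / 6)
  field_simp
  ring

/-- The `L²` bound on intervals whose length is comparable to `u`. -/
lemma integral_deriv_sq_le_of_length {u : ℝ} (hf : ContDiff ℝ 2 f) (hM : 0 ≤ M) (hu : 0 < u)
    (hul : u ≤ b - a) (hlu : b - a ≤ 2 * u)
    (h : ∀ x ∈ Set.Icc a b, ‖deriv (deriv f) x‖ ≤ M * ‖f x‖) :
    ∫ x in a..b, ‖deriv f x‖ ^ 2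
      ≤ (2 * u * (6 / u ^ 2 + M)) ^ 2 * ∫ x in a..b, ‖f x‖ ^ 2 := by
  have hc : Continuous f := hf.continuous
  have hc1 : Continuous (deriv f) := hf.continuous_deriv (by norm_num)
  have hL : 0 < b - a := hu.trans_le hul
  have hab : a < b := sub_pos.1 hL
  set B := ∫ x in a..b, ‖f x‖ ^ 2 with hB
  set K := 6 / u ^ 2 + M with hK
  have hK0 : 0 ≤ K := by positivity
  have hB0 : 0 ≤ B := intervalIntegral.integral_nonneg hab.le fun x _ => by positivity
  have hpt : ∀ x ∈ Set.Icc a b, ‖deriv f x‖ ^ 2 ≤ K ^ 2 * ((b - a) * B) := by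
    intro x hx
    have hN0 : 0 ≤ ∫ t in a..b, ‖f t‖ :=
      intervalIntegral.integral_nonneg hab.le fun x _ => norm_nonneg _
    have hle : ‖deriv f x‖ ≤ K * ∫ t in a..b, ‖f t‖ := by
      refine (norm_deriv_le_integral hf hM hab h hx).trans
        (mul_le_mul_of_nonneg_right ?_ hN0)
      rw [hK]
      gcongr
    calc ‖deriv f x‖ ^ 2 ≤ (K * ∫ t in a..b, ‖f t‖) ^ 2 := by gcongr
      _ = K ^ 2 * (∫ t in a..b, ‖f t‖) ^ 2 := mul_pow _ _ _
      _ ≤ K ^ 2 * ((b - a) * B) := by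
        gcongr
        exact sq_integral_le_mul_integral_sq hab hc.norm
  calc ∫ x in a..b, ‖deriv f x‖ ^ 2 ≤ ∫ _ in a..b, K ^ 2 * ((b - a) * B) :=
        intervalIntegral.integral_mono_on hab.le
          (Continuous.intervalIntegrable (by fun_prop) _ _)
          (Continuous.intervalIntegrable (by fun_prop) _ _) hpt
    _ = (K * (b - a)) ^ 2 * B := by
        rw [intervalIntegral.integral_const, smul_eq_mul]
        ring
    _ ≤ (K * (2 * u)) ^ 2 * B := by gcongr
    _ = (2 * u * (6 / u ^ 2 + M)) ^ 2 * B := by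
        rw [hK]
        ring

end Local

/-- Derivative bound for generalized eigenfunctions on an edge: there is a constant
`C = C(u, C₀, Λ)` such that for every interval `[0, l]` with `l ≥ u`, every
`|λ| ≤ Λ`, every measurable potential `V` with `|V| ≤ C₀` on `[0, l]`, and every
`C²` solution of `f'' = (V - λ) f` on `[0, l]`, one has
`∫₀^l |f'|² ≤ C ∫₀^l |f|²`. -/
theorem eigenfunction_derivative_bound (u C₀ Λ : ℝ) (hu : 0 < u) (hC₀ : 0 ≤ C₀)
    (hΛ : 0 ≤ Λ) :
    ∃ C : ℝ, 0 < C ∧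
      ∀ l : ℝ, u ≤ l → ∀ lam : ℝ, |lam| ≤ Λ →
      ∀ V : ℝ → ℝ, Measurable V → (∀ x ∈ Set.Icc (0 : ℝ) l, |V x| ≤ C₀) →
      ∀ f : ℝ → ℂ, ContDiff ℝ 2 f →
      (∀ x ∈ Set.Icc (0 : ℝ) l, deriv (deriv f) x = ((V x : ℂ) - (lam : ℂ)) * f x) →
      ∫ x in (0 : ℝ)..l, ‖deriv f x‖ ^ 2 ≤ C * ∫ x in (0 : ℝ)..l, ‖f x‖ ^ 2 := by
  have hM : 0 ≤ C₀ + Λ := add_nonneg hC₀ hΛ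
  refine ⟨(2 * u * (6 / u ^ 2 + (C₀ + Λ))) ^ 2, by positivity, ?_⟩
  intro l hl lam hlam V _ hV f hf hode
  have hc : Continuous f := hf.continuous
  have hc1 : Continuous (deriv f) := hf.continuous_deriv (by norm_num)
  have h : ∀ x ∈ Set.Icc 0 l, ‖deriv (deriv f) x‖ ≤ (C₀ + Λ) * ‖f x‖ := by
    intro x hx
    rw [hode x hx, norm_mul, ← Complex.ofReal_sub, Complex.norm_real, Real.norm_eq_abs]
    gcongr
    exact (abs_sub _ _).trans (add_le_add (hV x hx) hlam)
  -- Induction on the number of pieces: an interval longer than `2 * u` sheds its last piece of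
  -- length `u`, and what remains still has length at least `u`.
  have key : ∀ n : ℕ, ∀ t, u ≤ t → t ≤ l → t ≤ (n + 2) * u →
      ∫ x in (0 : ℝ)..t, ‖deriv f x‖ ^ 2
        ≤ (2 * u * (6 / u ^ 2 + (C₀ + Λ))) ^ 2 * ∫ x in (0 : ℝ)..t, ‖f x‖ ^ 2 := by
    intro n
    induction n with
    | zero =>
      intro t hut htl ht
      refine integral_deriv_sq_le_of_length hf hM hu (by linarith) (by simpa using ht) ?_
      exact fun x hx => h x ⟨hx.1, hx.2.trans htl⟩
    | succ n ih =>
      intro t hut htl ht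
      push_cast at ht
      rcases le_or_gt t (2 * u) with h2 | h2
      · exact ih t hut htl (h2.trans (by gcongr; linarith [n.cast_nonneg (α := ℝ)]))
      · have hd : Continuous fun x => ‖deriv f x‖ ^ 2 := by fun_prop
        have hg : Continuous fun x => ‖f x‖ ^ 2 := by fun_prop
        rw [← intervalIntegral.integral_add_adjacent_intervals
          (hd.intervalIntegrable 0 (t - u)) (hd.intervalIntegrable (t - u) t),
          ← intervalIntegral.integral_add_adjacent_intervals
          (hg.intervalIntegrable 0 (t - u)) (hg.intervalIntegrable (t - u) t), mul_add]
        refine add_le_add (ih _ (by linarith) (by linarith) (by linarith)) ?_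
        refine integral_deriv_sq_le_of_length hf hM hu (by linarith) (by linarith) ?_
        exact fun x hx => h x ⟨by linarith [hx.1], hx.2.trans htl⟩
  obtain ⟨n, hn⟩ := exists_nat_ge (l / u)
  refine key n l hl le_rfl ?_
  rw [div_le_iff₀ hu] at hn
  linarith
end

section
/- Let δ > 0 and K ≥ 0 be real numbers. There exists a constant C > 0, depending only on δ and K, such that for every real l ≥ 2δ, every measurable V : [0, l] → ℝ with |V(x)| ≤ K for all x ∈ [0, l], every continuous g : [0, l] → ℂ, and every twice continuously differentiable f : [0, l] → ℂ satisfying −f''(x) + V(x)·f(x) = g(x) for all x ∈ (0, l), one has ∫_δ^{l−δ} |f'(x)|² dx ≤ C·( ∫₀^l |f(x)|² dx + ∫₀^l |g(x)|² dx ). -/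
/-!
The real function `h = ⟪f, f'⟫` satisfies `h' = |f'|² + ⟪f, f''⟫ ≥ |f'|² - w` with
`w = (K + 1/2) |f|² + |g|²/2`, by the equation and Young's inequality. Integrating over
`[δ, l - δ]` bounds `∫ |f'|²` by `∫ w + h (l - δ) - h δ`. The two boundary values are controlled with
the cutoffs `x / δ` on `[0, δ]` and `(l - x) / δ` on `[l - δ, l]`: for `η` affine with slope
`c`, `(η² h)' = 2 η c h + η² h' ≥ η² |f'|² - 2 |c η| |f| |f'| - w ≥ -c² |f|² - w`
as long as `η² ≤ 1` (`neg_deriv_cutoff_le`). All three integrations have the integrand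
`q = |f|²/δ² + w` on the right, up to the term `-|f'|²` in the middle one, so adding them
gives the inequality with `C = 1/δ² + K + 1`.
-/

open scoped InnerProductSpace

/-- The equation gives a one-sided bound on `⟪f, f''⟫`, pointwise: here `a`, `b`, `d` are the values
of `f`, `f''`, `g`. -/
lemma neg_inner_second_deriv_le {K v : ℝ} {a b d : ℂ} (hv : |v| ≤ K)
    (h : -b + (v : ℂ) * a = d) :
    -⟪a, b⟫_ℝ ≤ (K + 1 / 2) * ‖a‖ ^ 2 + ‖d‖ ^ 2 / 2 := by
  have hb : b = v • a - d := by
    rw [Complex.real_smul, ← h]; ring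
  rw [hb, inner_sub_right, inner_smul_right, real_inner_self_eq_norm_sq]
  have h1 := real_inner_le_norm a d
  have h2 := mul_le_mul_of_nonneg_right (neg_le_of_abs_le hv) (sq_nonneg ‖a‖)
  nlinarith [sq_nonneg (‖a‖ - ‖d‖)]

/-- Pointwise absorption: `a`, `p` are the values of `f`, `f'`, `s` is that of `⟪f, f''⟫`, and `e`
that of an affine cutoff with slope `c`. The left side is minus the derivative of
`η² ⟪f, f'⟫`. -/
lemma neg_deriv_cutoff_le {c e s w : ℝ} {a p : ℂ} (hs : -s ≤ w) (hw : 0 ≤ w)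
    (he : e ^ 2 ≤ 1) :
    -(2 * e * c * ⟪a, p⟫_ℝ + e ^ 2 * (s + ‖p‖ ^ 2)) ≤ c ^ 2 * ‖a‖ ^ 2 + w := by
  -- completing the square in `ℂ` absorbs the mixed term
  have h1 : 0 ≤ ‖c • a + e • p‖ ^ 2 := sq_nonneg _
  rw [norm_add_sq_real, inner_smul_left, inner_smul_right, norm_smul, norm_smul, mul_pow,
    mul_pow, Real.norm_eq_abs, Real.norm_eq_abs, sq_abs, sq_abs] at h1
  simp only [conj_trivial] at h1
  nlinarith [mul_nonneg (sq_nonneg e) (sub_nonneg.2 hs), mul_nonneg (sub_nonneg.2 he) hw]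


/-- Caccioppoli inequality on an interval: there is a constant `C = C(δ, K)` such
that for every `l ≥ 2δ`, every measurable potential `V` with `|V| ≤ K` on `[0, l]`,
every continuous `g` on `[0, l]`, and every `C²` solution of `-f'' + V f = g` on
`(0, l)`, one has `∫_δ^{l-δ} |f'|² ≤ C (∫₀^l |f|² + ∫₀^l |g|²)`. -/
theorem caccioppoli_interval (δ K : ℝ) (hδ : 0 < δ) (hK : 0 ≤ K) :
    ∃ C : ℝ, 0 < C ∧
      ∀ l : ℝ, 2 * δ ≤ l →
      ∀ V : ℝ → ℝ, Measurable V → (∀ x ∈ Set.Icc (0 : ℝ) l, |V x| ≤ K) →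
      ∀ g : ℝ → ℂ, ContinuousOn g (Set.Icc (0 : ℝ) l) →
      ∀ f : ℝ → ℂ, ContDiff ℝ 2 f →
      (∀ x ∈ Set.Ioo (0 : ℝ) l, -(deriv (deriv f) x) + (V x : ℂ) * f x = g x) →
      ∫ x in δ..(l - δ), ‖deriv f x‖ ^ 2 ≤
        C * ((∫ x in (0 : ℝ)..l, ‖f x‖ ^ 2) + ∫ x in (0 : ℝ)..l, ‖g x‖ ^ 2) := by
  refine ⟨1 / δ ^ 2 + K + 1, by positivity, ?_⟩
  intro l hl V _ hV g hg f hf heq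
  have hf' : ContDiff ℝ 1 (deriv f) := ((contDiff_succ_iff_deriv (n := 1)).1 hf).2.2
  have hd1 : ∀ x, HasDerivAt f (deriv f x) x := fun x =>
    (hf.differentiable (by norm_num) x).hasDerivAt
  have hd2 : ∀ x, HasDerivAt (deriv f) (deriv (deriv f) x) x := fun x =>
    (hf'.differentiable (by norm_num) x).hasDerivAt
  have hcf : Continuous f := hf.continuous
  have hcf' : Continuous (deriv f) := hf'.continuous
  set h : ℝ → ℝ := fun x => ⟪f x, deriv f x⟫_ℝ
  have hch : Continuous h := hcf.inner hcf'
  have hdh : ∀ x, HasDerivAt h (⟪f x, deriv (deriv f) x⟫_ℝ + ‖deriv f x‖ ^ 2) x := by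
    intro x
    have := (hd1 x).inner ℝ (hd2 x)
    rwa [real_inner_self_eq_norm_sq] at this
  set w : ℝ → ℝ := fun x => (K + 1 / 2) * ‖f x‖ ^ 2 + ‖g x‖ ^ 2 / 2 with hw
  have hw0 : ∀ x, 0 ≤ w x := fun x => by simp only [hw]; positivity
  have hs : ∀ x ∈ Set.Ioo (0 : ℝ) l, -⟪f x, deriv (deriv f) x⟫_ℝ ≤ w x := fun x hx =>
    neg_inner_second_deriv_le (hV x (Set.Ioo_subset_Icc_self hx)) (heq x hx)
  set q : ℝ → ℝ := fun x => (1 / δ) ^ 2 * ‖f x‖ ^ 2 + w x with hq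
  have hcw : ContinuousOn w (Set.Icc 0 l) := by
    have := hcf.continuousOn (s := Set.Icc 0 l)
    fun_prop
  have hcq : ContinuousOn q (Set.Icc 0 l) := by
    have := hcf.continuousOn (s := Set.Icc 0 l)
    fun_prop
  have hδl : δ ≤ l - δ := by linarith
  have s1 : Set.Icc 0 δ ⊆ Set.Icc 0 l := Set.Icc_subset_Icc le_rfl (by linarith)
  have s2 : Set.Icc δ (l - δ) ⊆ Set.Icc 0 l := Set.Icc_subset_Icc hδ.le (by linarith)
  have s3 : Set.Icc (l - δ) l ⊆ Set.Icc 0 l := Set.Icc_subset_Icc (by linarith) le_rfl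
  have hcut : ∀ (η : ℝ → ℝ) (c x : ℝ), HasDerivAt η c x →
      HasDerivAt (fun y => -(η y ^ 2 * h y))
        (-(2 * η x * c * h x + η x ^ 2 * (⟪f x, deriv (deriv f) x⟫_ℝ + ‖deriv f x‖ ^ 2))) x := by
    intro η c x hη
    refine ((hη.pow 2).mul (hdh x)).neg.congr_deriv ?_
    simp
  have hleft : -h δ ≤ ∫ x in (0 : ℝ)..δ, q x := by
    have hη : ∀ x : ℝ, HasDerivAt (fun y : ℝ => y / δ) (1 / δ) x := fun x =>
      (hasDerivAt_id x).div_const δ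
    have := intervalIntegral.sub_le_integral_of_hasDeriv_right_of_le (φ := q) hδ.le
      (g := fun y => -((y / δ) ^ 2 * h y)) (by fun_prop)
      (fun x _ => (hcut _ _ x (hη x)).hasDerivWithinAt)
      ((hcq.mono s1).integrableOn_Icc) (fun x hx => ?_)
    · simpa [hδ.ne'] using this
    · have hx1 : x / δ ≤ 1 := (div_le_one hδ).2 hx.2.le
      have hx0 : 0 ≤ x / δ := div_nonneg hx.1.le hδ.le
      exact neg_deriv_cutoff_le (hs x ⟨hx.1, by linarith [hx.2]⟩) (hw0 x) (by nlinarith)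
  have hright : h (l - δ) ≤ ∫ x in (l - δ)..l, q x := by
    have hη : ∀ x : ℝ, HasDerivAt (fun y : ℝ => (l - y) / δ) (-1 / δ) x := fun x =>
      ((hasDerivAt_id x).const_sub l).div_const δ
    have := intervalIntegral.sub_le_integral_of_hasDeriv_right_of_le (φ := q)
      (show l - δ ≤ l by linarith)
      (g := fun y => -(((l - y) / δ) ^ 2 * h y)) (by fun_prop)
      (fun x _ => (hcut _ _ x (hη x)).hasDerivWithinAt)
      ((hcq.mono s3).integrableOn_Icc) (fun x hx => ?_)
    · simpa [hδ.ne'] using this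
    · have hx1 : (l - x) / δ ≤ 1 := (div_le_one hδ).2 (by linarith [hx.1])
      have hx0 : 0 ≤ (l - x) / δ := div_nonneg (by linarith [hx.2]) hδ.le
      have := neg_deriv_cutoff_le (c := -1 / δ) (a := f x) (p := deriv f x)
        (hs x ⟨by linarith [hx.1], hx.2⟩) (hw0 x)
        (show ((l - x) / δ) ^ 2 ≤ 1 by nlinarith)
      rw [neg_div, neg_sq] at this
      rw [neg_div]
      exact this
  have hcN : Continuous fun x => ‖deriv f x‖ ^ 2 := by fun_prop
  have hi : ∀ {a b : ℝ}, a ≤ b → Set.Icc a b ⊆ Set.Icc 0 l →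
      IntervalIntegrable q MeasureTheory.volume a b := fun hab hs =>
    (hcq.mono hs).intervalIntegrable_of_Icc hab
  have hmid : -h (l - δ) - -h δ ≤ ∫ x in δ..(l - δ), (q x - ‖deriv f x‖ ^ 2) := by
    refine intervalIntegral.sub_le_integral_of_hasDeriv_right_of_le
      (g := fun y => -h y) hδl (by fun_prop)
      (fun x _ => (hdh x).neg.hasDerivWithinAt)
      (((hcq.mono s2).sub hcN.continuousOn).integrableOn_Icc) (fun x hx => ?_)
    have h1 := hs x ⟨by linarith [hx.1], by linarith [hx.2]⟩
    have h2 : 0 ≤ (1 / δ) ^ 2 * ‖f x‖ ^ 2 := by positivity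
    simp only [hq]
    linarith
  rw [intervalIntegral.integral_sub (hi hδl s2) (hcN.intervalIntegrable _ _)] at hmid
  have hadd : (∫ x in (0 : ℝ)..δ, q x) + (∫ x in δ..(l - δ), q x) + (∫ x in (l - δ)..l, q x)
      = ∫ x in (0 : ℝ)..l, q x := by
    rw [intervalIntegral.integral_add_adjacent_intervals (hi hδ.le s1) (hi hδl s2),
      intervalIntegral.integral_add_adjacent_intervals
        ((hi hδ.le s1).trans (hi hδl s2)) (hi (by linarith) s3)]
  have hl0 : 0 ≤ l := by linarith
  have hif : IntervalIntegrable (fun x => ‖f x‖ ^ 2) MeasureTheory.volume 0 l :=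
    Continuous.intervalIntegrable (by fun_prop) _ _
  have hig : IntervalIntegrable (fun x => ‖g x‖ ^ 2) MeasureTheory.volume 0 l :=
    ContinuousOn.intervalIntegrable_of_Icc hl0 (by fun_prop)
  have hqint : ∫ x in (0 : ℝ)..l, q x ≤ (1 / δ ^ 2 + K + 1) *
      ((∫ x in (0 : ℝ)..l, ‖f x‖ ^ 2) + ∫ x in (0 : ℝ)..l, ‖g x‖ ^ 2) := by
    rw [← intervalIntegral.integral_add hif hig, ← intervalIntegral.integral_const_mul]
    refine intervalIntegral.integral_mono_on hl0 (hi hl0 subset_rfl)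
      ((hif.add hig).const_mul _) (fun x _ => ?_)
    have e1 : 0 ≤ (1 / δ ^ 2 + K) * ‖g x‖ ^ 2 := by positivity
    have e2 := sq_nonneg ‖g x‖
    have e3 := sq_nonneg ‖f x‖
    simp only [hq, hw, one_div, inv_pow] at e1 ⊢
    linarith
  linarith
end
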